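/- Let X_1, ..., X_k, X_{k+1}, ..., X_n be an exchangeable sequence of random variables taking values in a measurable space S. Then there exists a mixture of i.i.d. laws (a probability law on S^k of the form ∫ π^{⊗k} dμ(π) for some probability measure μ on probability measures π on S) whose total variation distance from the distribution of (X_1, ..., X_k) is at most 2|S|k/n if S is finite, and at most k(k−1)/n for general S. -/

import Mathlib

open MeasureTheory

/-!
Given the values of `X_1, ..., X_n`, exchangeability makes `(X_1, ..., X_k)` a sample without
replacement from them, while the i.i.d. mixture over the empirical measure samples with
replacement. So it suffices to bound the density of the first sampling scheme with respect to the
second, for a fixed population of size `n`.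

Since `(n)_k` of the `n ^ k` index functions are injective, the density is at most
`n ^ k / (n)_k`, and `(n)_k / n ^ k ≥ 1 - (k choose 2) / n`. If the values lie in a set of `c`
points, a word in which `s` occurs `K s` times has density
`(∏ (N s)_{K s} / ∏ N s ^ K s) * n ^ k / (n)_k`, where `N s` is the multiplicity of `s` in the
population. Building the word one letter at a time, each chosen by pigeonhole, bounds this by
`(n + c)_k / (n)_k`, and `(n)_k / (n + c)_k ≥ 1 - c k / n`.
-/

section DescFactorial

lemma mul_pow_le_mul_descFactorial_add (n k : ℕ) :
    n * n ^ k ≤ n * n.descFactorial k + k.choose 2 * n ^ k := by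
  induction k with
  | zero => simp
  | succ k ih =>
    have hsucc : n * n.descFactorial k ≤ n.descFactorial (k + 1) + k * n ^ k :=
      calc n * n.descFactorial k
        _ ≤ (n - k + k) * n.descFactorial k := by gcongr; omega
        _ = n.descFactorial (k + 1) + k * n.descFactorial k := by
          rw [Nat.descFactorial_succ, add_mul]
        _ ≤ _ := by gcongr; exact n.descFactorial_le_pow k
    calc n * n ^ (k + 1)
      _ = n * (n * n ^ k) := by ring
      _ ≤ n * (n * n.descFactorial k + k.choose 2 * n ^ k) := by gcongr
      _ ≤ n * (n.descFactorial (k + 1) + k * n ^ k + k.choose 2 * n ^ k) := by gcongr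
      _ = n * n.descFactorial (k + 1) + (k + 1).choose 2 * n ^ (k + 1) := by
        rw [Nat.choose_succ_succ' k 1, Nat.choose_one_right]; ring

lemma succ_mul_descFactorial_succ_le (n k : ℕ) :
    (n + 1) * (n + 1).descFactorial k
      ≤ (n + 1) * n.descFactorial k + k * (n + 1).descFactorial k := by
  rw [← Nat.succ_descFactorial n k, ← add_mul]
  exact Nat.mul_le_mul_right _ (by omega)

lemma mul_descFactorial_add_le (n c k : ℕ) :
    n * (n + c).descFactorial k ≤ n * n.descFactorial k + c * k * (n + c).descFactorial k := by
  induction c with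
  | zero => simp
  | succ c ih =>
    have hmono : (n + c).descFactorial k ≤ (n + c + 1).descFactorial k :=
      Nat.descFactorial_le k (Nat.le_succ _)
    obtain ⟨e, he⟩ := Nat.exists_eq_add_of_le hmono
    have hstep : n * e ≤ k * (n + c + 1).descFactorial k := by
      have hsucc := succ_mul_descFactorial_succ_le (n + c) k
      rw [he, mul_add (n + c + 1), add_le_add_iff_left, ← he] at hsucc
      exact (Nat.mul_le_mul_right e (by omega)).trans hsucc
    calc n * (n + c + 1).descFactorial k
      _ = n * (n + c).descFactorial k + n * e := by rw [he, mul_add]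
      _ ≤ n * n.descFactorial k + c * k * (n + c).descFactorial k
          + k * (n + c + 1).descFactorial k := by gcongr
      _ ≤ n * n.descFactorial k + c * k * (n + c + 1).descFactorial k
          + k * (n + c + 1).descFactorial k := by gcongr
      _ = n * n.descFactorial k + (c + 1) * k * (n + c + 1).descFactorial k := by ring

end DescFactorial

section ProdDescFactorial

variable {σ : Type*} [Fintype σ]

lemma prod_apply_add_single [DecidableEq σ] {M : Type*} [CommMonoid M] (F : σ → ℕ → M)
    (K : σ → ℕ) (s : σ) {r : M} (hr : F s (K s + 1) = r * F s (K s)) :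
    ∏ t, F t ((K + Pi.single s 1 : σ → ℕ) t) = r * ∏ t, F t (K t) := by
  rw [Fintype.prod_eq_mul_prod_compl s, Fintype.prod_eq_mul_prod_compl s fun t => F t (K t),
    ← mul_assoc, Pi.add_apply, Pi.single_eq_same, hr]
  congr 1
  refine Finset.prod_congr rfl fun t ht => ?_
  rw [Pi.add_apply, Pi.single_eq_of_ne (by simpa using ht), add_zero]

-- Pigeonhole: averaging over the support of `K` with weights `N s`, some `s` has
-- `(K s - 1) / N s ≥ (m + 1 - card σ) / ∑ t, N t`.
lemma exists_eq_add_single_and_mul_le [DecidableEq σ] (N K : σ → ℕ) {m : ℕ}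
    (hm : ∑ s, K s = m + 1) :
    ∃ (K' : σ → ℕ) (s : σ), K = K' + Pi.single s 1 ∧
      (N s - K' s) * ∑ t, N t ≤ N s * (∑ t, N t + Fintype.card σ - m) := by
  set n := ∑ t, N t
  set c := Fintype.card σ
  let T : Finset σ := {s | K s ≠ 0}
  have hT : T.Nonempty := by
    by_contra! hT
    have : ∑ s, K s = 0 := Finset.sum_eq_zero fun s _ => by
      simpa [T] using Finset.eq_empty_iff_forall_notMem.mp hT s
    omega
  have hsum : m + 1 ≤ ∑ s ∈ T, (K s - 1) + c :=
    calc m + 1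
      _ = ∑ s ∈ T, K s := by rw [← hm, Finset.sum_filter_ne_zero]
      _ ≤ ∑ s ∈ T, (K s - 1 + 1) := Finset.sum_le_sum fun s _ => by omega
      _ ≤ ∑ s ∈ T, (K s - 1) + c := by
        rw [Finset.sum_add_distrib, Finset.sum_const, smul_eq_mul, mul_one]
        gcongr
        exact T.card_le_univ
  obtain ⟨s, hs, hle⟩ : ∃ s ∈ T, N s * (m + 1 - c) ≤ (K s - 1) * n := by
    refine Finset.exists_le_of_sum_le hT ?_
    rw [← Finset.sum_mul, ← Finset.sum_mul, mul_comm]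
    exact Nat.mul_le_mul (by omega) (Finset.sum_le_sum_of_subset (Finset.subset_univ T))
  refine ⟨K - Pi.single s 1, s, (tsub_add_cancel_of_le ?_).symm, ?_⟩
  · intro t
    obtain rfl | hts := eq_or_ne t s
    · simpa [T, Nat.one_le_iff_ne_zero] using hs
    · simp [hts]
  calc (N s - (K - Pi.single s 1 : σ → ℕ) s) * n
    _ = N s * n - (K s - 1) * n := by
      rw [Pi.sub_apply, Pi.single_eq_same, Nat.sub_mul]
    _ ≤ N s * n - N s * (m + 1 - c) := by gcongr
    _ = N s * (n - (m + 1 - c)) := (Nat.mul_sub ..).symm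
    _ ≤ N s * (n + c - m) := Nat.mul_le_mul_left _ (by omega)

lemma prod_descFactorial_mul_pow_le (N K : σ → ℕ) :
    (∏ s, (N s).descFactorial (K s)) * (∑ s, N s) ^ ∑ s, K s
      ≤ (∑ s, N s + Fintype.card σ).descFactorial (∑ s, K s) * ∏ s, N s ^ K s := by
  classical
  induction hm : ∑ s, K s generalizing K with
  | zero =>
    have hK : ∀ s, K s = 0 := by simpa using hm
    simp [hK]
  | succ m ih =>
    obtain ⟨K, s, rfl, hs⟩ := exists_eq_add_single_and_mul_le N K hm
    have hKm : ∑ t, K t = m := by simpa [Finset.sum_add_distrib] using hm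
    rw [prod_apply_add_single (fun t => (N t).descFactorial) K s (Nat.descFactorial_succ _ _),
      prod_apply_add_single (fun t j => N t ^ j) K s (pow_succ' _ _), Nat.descFactorial_succ]
    set n := ∑ t, N t
    calc (N s - K s) * (∏ t, (N t).descFactorial (K t)) * n ^ (m + 1)
      _ = (N s - K s) * n * ((∏ t, (N t).descFactorial (K t)) * n ^ m) := by ring
      _ ≤ N s * (n + Fintype.card σ - m)
          * ((n + Fintype.card σ).descFactorial m * ∏ t, N t ^ K t) := Nat.mul_le_mul hs (ih K hKm)
      _ = _ := by ring

end ProdDescFactorial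

section Fibers

variable {S ι κ : Type*}

/-- An injective lift of `y` through `x` amounts to an embedding of each fiber of `y` into the
corresponding fiber of `x`. -/
def embeddingLiftEquiv (x : ι → S) (y : κ → S) :
    {f : κ ↪ ι // x ∘ f = y} ≃ ∀ s, {i // y i = s} ↪ {j // x j = s} where
  toFun f s := ⟨fun i => ⟨f.1 i, (congrFun f.2 i).trans i.2⟩,
    fun _ _ h => Subtype.ext (f.1.injective (congrArg Subtype.val h))⟩
  invFun g :=
    ⟨⟨fun i => g (y i) ⟨i, rfl⟩, by
        have hval : ∀ s (i : {i // y i = s}), (g (y i) ⟨i, rfl⟩ : ι) = g s i := by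
          rintro _ ⟨i, rfl⟩; rfl
        intro i j hij
        have hy : y j = y i := by
          rw [← (g (y i) ⟨i, rfl⟩).2, ← (g (y j) ⟨j, rfl⟩).2]
          exact congrArg x hij.symm
        have hg : g (y i) ⟨i, rfl⟩ = g (y i) ⟨j, hy⟩ :=
          Subtype.ext (hij.trans (hval (y i) ⟨j, hy⟩))
        exact congrArg Subtype.val ((g (y i)).injective hg)⟩,
      funext fun i => (g (y i) ⟨i, rfl⟩).2⟩
  left_inv _ := rfl
  right_inv g := by
    ext s ⟨i, rfl⟩
    rfl

variable [Fintype S]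

lemma card_embedding_lift [Finite ι] [Finite κ] (x : ι → S) (y : κ → S) :
    Nat.card {f : κ ↪ ι // x ∘ f = y}
      = ∏ s, (Nat.card {j // x j = s}).descFactorial (Nat.card {i // y i = s}) := by
  classical
  cases nonempty_fintype ι
  cases nonempty_fintype κ
  rw [Nat.card_congr (embeddingLiftEquiv x y), Nat.card_pi]
  simp_rw [Nat.card_eq_fintype_card, Fintype.card_embedding_eq]

lemma card_lift [Finite ι] [Finite κ] (x : ι → S) (y : κ → S) :
    Nat.card {f : κ → ι // x ∘ f = y}
      = ∏ s, Nat.card {j // x j = s} ^ Nat.card {i // y i = s} := by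
  classical
  cases nonempty_fintype κ
  simp_rw [funext_iff, Function.comp_apply]
  rw [Nat.card_congr (Equiv.subtypePiEquivPi (p := fun i j => x j = y i)), Nat.card_pi,
    ← Fintype.prod_fiberwise' y fun s => Nat.card {j // x j = s}]
  simp [Finset.prod_const]

variable [Fintype ι]

lemma sum_card_fiber (x : ι → S) : ∑ s, Nat.card {j // x j = s} = Fintype.card ι := by
  rw [← Nat.card_sigma, Nat.card_congr (Equiv.sigmaFiberEquiv x), Nat.card_eq_fintype_card]

lemma card_embedding_lift_mul_pow_le [Fintype κ] (x : ι → S) (y : κ → S) :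
    Nat.card {f : κ ↪ ι // x ∘ f = y} * Fintype.card ι ^ Fintype.card κ
      ≤ (Fintype.card ι + Fintype.card S).descFactorial (Fintype.card κ)
        * Nat.card {f : κ → ι // x ∘ f = y} := by
  rw [card_embedding_lift, card_lift, ← sum_card_fiber x, ← sum_card_fiber y]
  exact prod_descFactorial_mul_pow_le _ _

end Fibers

section Sampling

variable {Ω S ι κ : Type*} [MeasurableSpace Ω] [MeasurableSpace S] [Fintype ι]

/-- The empirical measure of a finite sample `x`: the uniform distribution on the entries of `x`,
counted with multiplicity. It is `0` for the empty sample. -/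
noncomputable def empiricalMeasure (x : ι → S) : Measure S :=
  (Fintype.card ι : ENNReal)⁻¹ • ∑ i, Measure.dirac (x i)

lemma card_smul_empiricalMeasure (x : ι → S) :
    Fintype.card ι • empiricalMeasure x = ∑ i, Measure.dirac (x i) := by
  obtain h | h := isEmpty_or_nonempty ι
  · simp
  · rw [empiricalMeasure, ← Nat.cast_smul_eq_nsmul ENNReal, smul_smul,
      ENNReal.mul_inv_cancel (by simp) (by simp), one_smul]

instance [Nonempty ι] (x : ι → S) : IsProbabilityMeasure (empiricalMeasure x) where
  measure_univ := by simp [empiricalMeasure, ENNReal.inv_mul_cancel]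

lemma measurable_empiricalMeasure {X : ι → Ω → S} (hX : ∀ i, Measurable (X i)) :
    Measurable fun ω => empiricalMeasure fun i => X i ω := by
  refine Measure.measurable_of_measurable_coe _ fun A hA => ?_
  simp only [empiricalMeasure, Measure.smul_apply, Measure.finsetSum_apply, smul_eq_mul]
  refine (Finset.measurable_sum _ fun i _ => ?_).const_mul _
  exact (Measure.measurable_coe hA).comp (Measure.measurable_dirac.comp (hX i))

lemma bind_empiricalMeasure {m : Measure Ω} {X : ι → Ω → S} (hX : ∀ i, Measurable (X i)) :
    m.bind (fun ω => empiricalMeasure fun i => X i ω)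
      = (Fintype.card ι : ENNReal)⁻¹ • ∑ i, m.map (X i) := by
  ext A hA
  rw [Measure.bind_apply hA (measurable_empiricalMeasure hX).aemeasurable]
  have hdirac i : Measurable fun ω => Measure.dirac (X i ω) A :=
    (Measure.measurable_coe hA).comp (Measure.measurable_dirac.comp (hX i))
  simp only [empiricalMeasure, Measure.smul_apply, Measure.finsetSum_apply, smul_eq_mul]
  rw [lintegral_const_mul _ (Finset.measurable_sum _ fun i _ => hdirac i),
    lintegral_finsetSum _ fun i _ => hdirac i]
  congr 2 with i
  rw [Measure.map_apply (hX i) hA, ← lintegral_indicator_one (hX i hA)]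
  exact lintegral_congr fun ω => Measure.dirac_apply' _ hA

lemma sum_dirac_eq_sum_card_smul [Fintype S] (x : ι → S) :
    ∑ i, Measure.dirac (x i) = ∑ y, Nat.card {i // x i = y} • Measure.dirac y := by
  classical
  rw [← Fintype.sum_fiberwise' x Measure.dirac]
  simp

variable (κ) in
/-- The law of a sample indexed by `κ` drawn uniformly without replacement from the population
`x`. It is `0` when `κ` is larger than the population. -/
noncomputable def withoutReplacement [Fintype κ] (x : ι → S) : Measure (κ → S) :=
  empiricalMeasure fun f : κ ↪ ι => x ∘ f

variable (κ) in
/-- The law of a sample indexed by `κ` drawn uniformly with replacement from the population `x`. -/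
noncomputable def withReplacement [Fintype κ] [DecidableEq κ] (x : ι → S) : Measure (κ → S) :=
  empiricalMeasure fun f : κ → ι => x ∘ f

variable [Fintype κ]

lemma descFactorial_smul_withoutReplacement (x : ι → S) :
    (Fintype.card ι).descFactorial (Fintype.card κ) • withoutReplacement κ x
      = ∑ f : κ ↪ ι, Measure.dirac (x ∘ f) := by
  rw [← Fintype.card_embedding_eq, withoutReplacement, card_smul_empiricalMeasure]

variable [DecidableEq κ]

lemma pow_smul_withReplacement (x : ι → S) :
    Fintype.card ι ^ Fintype.card κ • withReplacement κ x
      = ∑ f : κ → ι, Measure.dirac (x ∘ f) := by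
  rw [← Fintype.card_fun, withReplacement, card_smul_empiricalMeasure]

lemma pi_empiricalMeasure [Nonempty ι] (x : ι → S) :
    Measure.pi (fun _ : κ => empiricalMeasure x) = withReplacement κ x := by
  refine Measure.pi_eq fun A hA => ?_
  have hind (f : κ → ι) : ∏ i, (A i).indicator (1 : S → ENNReal) (x (f i))
      = (Set.univ.pi A).indicator 1 (x ∘ f) := by
    classical
    simp [Set.indicator_apply, Finset.prod_ite_zero]
  simp only [withReplacement, empiricalMeasure, Measure.smul_apply, Measure.finsetSum_apply,
    smul_eq_mul, Measure.dirac_apply' _ (hA _), Measure.dirac_apply' _ (MeasurableSet.univ_pi hA),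
    Finset.prod_mul_distrib, Finset.prod_univ_sum, Fintype.piFinset_univ, hind]
  simp [ENNReal.inv_pow]

lemma descFactorial_smul_withoutReplacement_le_pow_smul_withReplacement (x : ι → S) :
    (Fintype.card ι).descFactorial (Fintype.card κ) • withoutReplacement κ x
      ≤ Fintype.card ι ^ Fintype.card κ • withReplacement κ x := by
  rw [descFactorial_smul_withoutReplacement, pow_smul_withReplacement]
  calc ∑ f : κ ↪ ι, Measure.dirac (x ∘ f)
    _ = ∑ f ∈ Finset.univ.map ⟨((⇑) : (κ ↪ ι) → κ → ι), DFunLike.coe_injective⟩,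
        Measure.dirac (x ∘ f) := by rw [Finset.sum_map]; rfl
    _ ≤ ∑ f : κ → ι, Measure.dirac (x ∘ f) :=
      Finset.sum_le_sum_of_subset_of_nonneg (Finset.subset_univ _) fun _ _ _ => Measure.zero_le _

lemma descFactorial_smul_withoutReplacement_le_descFactorial_smul_withReplacement
    [Nonempty ι] [Fintype S] (x : ι → S) :
    (Fintype.card ι).descFactorial (Fintype.card κ) • withoutReplacement κ x
      ≤ (Fintype.card ι + Fintype.card S).descFactorial (Fintype.card κ) • withReplacement κ x := by
  classical
  have hpow : (Fintype.card ι ^ Fintype.card κ) • ∑ f : κ ↪ ι, Measure.dirac (x ∘ f)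
      ≤ (Fintype.card ι + Fintype.card S).descFactorial (Fintype.card κ)
        • ∑ f : κ → ι, Measure.dirac (x ∘ f) := by
    rw [sum_dirac_eq_sum_card_smul, sum_dirac_eq_sum_card_smul, Finset.smul_sum, Finset.smul_sum]
    refine Finset.sum_le_sum fun y _ => ?_
    rw [smul_smul, smul_smul, mul_comm]
    exact nsmul_le_nsmul_left (Measure.zero_le _) (card_embedding_lift_mul_pow_le x y)
  rw [← descFactorial_smul_withoutReplacement, ← pow_smul_withReplacement,
    smul_comm _ (_ ^ _)] at hpow
  refine Measure.le_iff.mpr fun A _ => ?_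
  have hA := hpow A
  rw [Measure.smul_apply, Measure.smul_apply (_ ^ _), nsmul_eq_mul, nsmul_eq_mul] at hA
  refine (ENNReal.mul_le_mul_iff_right ?_ ?_).mp hA <;> simp

end Sampling

section Comparison

variable {α β : Type*} [MeasurableSpace α] [MeasurableSpace β]

lemma measureReal_sub_le_div {P Q : Measure α} [IsProbabilityMeasure P] [IsFiniteMeasure Q]
    {a b d n : ℕ} (hn : 0 < n) (hb : 0 < b) (hPQ : a • P ≤ b • Q) (hab : n * b ≤ n * a + d * b)
    (A : Set α) : P.real A - Q.real A ≤ d / n := by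
  have hA : a * P.real A ≤ b * Q.real A := by
    simpa [Measure.real] using ENNReal.toReal_mono (by finiteness) (hPQ A)
  have hab' : (n * b : ℝ) ≤ n * a + d * b := by exact_mod_cast hab
  have hb' : (0 : ℝ) < b := by exact_mod_cast hb
  have hn' : (0 : ℝ) < n := by exact_mod_cast hn
  rw [le_div_iff₀ hn', ← mul_le_mul_iff_of_pos_right hb']
  calc (P.real A - Q.real A) * n * b
    _ = n * b * P.real A - n * (b * Q.real A) := by ring
    _ ≤ n * b * P.real A - n * (a * P.real A) := by gcongr
    _ = (n * b - n * a) * P.real A := by ring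
    _ ≤ d * b * 1 := by
      gcongr
      · linarith
      · exact measureReal_le_one
    _ = d * b := mul_one _

lemma abs_measureReal_sub_le_div {P Q : Measure α} [IsProbabilityMeasure P]
    [IsProbabilityMeasure Q] {a b d n : ℕ} (hn : 0 < n) (hb : 0 < b) (hPQ : a • P ≤ b • Q)
    (hab : n * b ≤ n * a + d * b) {A : Set α} (hA : MeasurableSet A) :
    |P.real A - Q.real A| ≤ d / n := by
  refine abs_sub_le_iff.mpr ⟨measureReal_sub_le_div hn hb hPQ hab A, ?_⟩
  have hcompl := measureReal_sub_le_div hn hb hPQ hab Aᶜ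
  rw [probReal_compl_eq_one_sub hA, probReal_compl_eq_one_sub hA] at hcompl
  linarith

lemma smul_bind_le_smul_bind {m : Measure α} {f g : α → Measure β} (hf : Measurable f)
    (hg : Measurable g) {a b : ℕ} (h : ∀ x, a • f x ≤ b • g x) :
    a • m.bind f ≤ b • m.bind g := by
  refine Measure.le_iff.mpr fun A hA => ?_
  simp only [Measure.smul_apply, nsmul_eq_mul, Measure.bind_apply hA hf.aemeasurable,
    Measure.bind_apply hA hg.aemeasurable]
  rw [← lintegral_const_mul' _ _ (by simp), ← lintegral_const_mul' _ _ (by simp)]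
  exact lintegral_mono fun x => by simpa using h x A

end Comparison

section IIDMixture

variable {S : Type*} [MeasurableSpace S] {κ : Type*} [Fintype κ]

lemma measurableSet_isProbabilityMeasure :
    MeasurableSet {π : Measure S | IsProbabilityMeasure π} := by
  simp only [isProbabilityMeasure_iff]
  exact measurableSet_eq_fun (Measure.measurable_coe .univ) measurable_const

lemma aemeasurable_pi_const {μ : Measure (Measure S)} (hμ : ∀ᵐ π ∂μ, IsProbabilityMeasure π) :
    AEMeasurable (fun π => Measure.pi fun _ : κ => π) μ := by
  rw [← Measure.restrict_eq_self_of_ae_mem hμ]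
  refine aemeasurable_restrict_of_measurable_subtype measurableSet_isProbabilityMeasure ?_
  have (π : {π : Measure S | IsProbabilityMeasure π}) : IsProbabilityMeasure π.1 := π.2
  refine Measurable.measure_of_isPiSystem_of_isProbabilityMeasure generateFrom_pi.symm
    isPiSystem_pi ?_
  rintro _ ⟨A, hA, rfl⟩
  simp only [Measure.pi_pi]
  exact Finset.measurable_prod _ fun i _ =>
    (Measure.measurable_coe (hA i trivial)).comp measurable_subtype_coe

variable (κ) in
/-- The mixture of i.i.d. laws `∫ π^{⊗κ} dμ(π)`. -/
noncomputable def iidMixture (μ : Measure (Measure S)) : Measure (κ → S) :=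
  μ.bind fun π => Measure.pi fun _ : κ => π

lemma isProbabilityMeasure_iidMixture {μ : Measure (Measure S)} [IsProbabilityMeasure μ]
    (hμ : ∀ᵐ π ∂μ, IsProbabilityMeasure π) : IsProbabilityMeasure (iidMixture κ μ) :=
  isProbabilityMeasure_bind (aemeasurable_pi_const hμ) (hμ.mono fun _ _ => inferInstance)

end IIDMixture

section Exchangeable

variable {Ω S ι κ : Type*} [MeasurableSpace Ω] [MeasurableSpace S]
  {ℙ : Measure Ω} {X : ι → Ω → S}

/-- The family `X` is exchangeable under `ℙ`: its joint law is invariant under permutations of the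
index set. -/
def Exchangeable (X : ι → Ω → S) (ℙ : Measure Ω) : Prop :=
  ∀ σ : Equiv.Perm ι, ℙ.map (fun ω i => X (σ i) ω) = ℙ.map fun ω i => X i ω

lemma Exchangeable.map_embedding_eq [Finite κ] (hexch : Exchangeable X ℙ)
    (hX : ∀ i, Measurable (X i)) (f g : κ ↪ ι) :
    ℙ.map (fun ω i => X (f i) ω) = ℙ.map fun ω i => X (g i) ω := by
  obtain ⟨σ, hσ⟩ := Equiv.Perm.exists_extending_pair f g f.injective g.injective
  have hrestrict : Measurable fun (x : ι → S) i => x (f i) := by fun_prop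
  have hmap := congrArg (Measure.map fun (x : ι → S) i => x (f i)) (hexch σ)
  rw [Measure.map_map hrestrict (by fun_prop), Measure.map_map hrestrict (by fun_prop)] at hmap
  simpa [Function.comp_def, hσ] using hmap.symm

variable [Fintype ι]

/-- The law of the random measure `ω ↦ empiricalMeasure (X · ω)`, which serves as the mixing
measure. -/
noncomputable def empiricalLaw (X : ι → Ω → S) (ℙ : Measure Ω) : Measure (Measure S) :=
  ℙ.map fun ω => empiricalMeasure fun i => X i ω

lemma isProbabilityMeasure_empiricalLaw [IsProbabilityMeasure ℙ] (hX : ∀ i, Measurable (X i)) :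
    IsProbabilityMeasure (empiricalLaw X ℙ) :=
  Measure.isProbabilityMeasure_map (measurable_empiricalMeasure hX).aemeasurable

lemma ae_isProbabilityMeasure_empiricalLaw [Nonempty ι] (hX : ∀ i, Measurable (X i)) :
    ∀ᵐ π ∂empiricalLaw X ℙ, IsProbabilityMeasure π :=
  (ae_map_iff (measurable_empiricalMeasure hX).aemeasurable
    measurableSet_isProbabilityMeasure).mpr (.of_forall fun _ => inferInstance)

variable [Fintype κ]

lemma Exchangeable.map_eq_bind_withoutReplacement (hexch : Exchangeable X ℙ)
    (hX : ∀ i, Measurable (X i)) (e : κ ↪ ι) :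
    ℙ.map (fun ω i => X (e i) ω) = ℙ.bind fun ω => withoutReplacement κ fun i => X i ω := by
  simp only [withoutReplacement, Function.comp_def]
  rw [bind_empiricalMeasure fun f => by fun_prop,
    Finset.sum_congr rfl fun f _ => hexch.map_embedding_eq hX f e, Finset.sum_const,
    Finset.card_univ, ← Nat.cast_smul_eq_nsmul ENNReal, smul_smul,
    ENNReal.inv_mul_cancel (by simpa using Fintype.card_le_of_embedding e) (by simp), one_smul]

variable [DecidableEq κ]

lemma iidMixture_empiricalLaw [Nonempty ι] (hX : ∀ i, Measurable (X i)) :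
    iidMixture κ (empiricalLaw X ℙ) = ℙ.bind fun ω => withReplacement κ fun i => X i ω := by
  rw [iidMixture, Measure.bind, empiricalLaw, AEMeasurable.map_map_of_aemeasurable
    (aemeasurable_pi_const (ae_isProbabilityMeasure_empiricalLaw hX))
    (measurable_empiricalMeasure hX).aemeasurable]
  simp only [Function.comp_def, pi_empiricalMeasure]
  rfl

lemma Exchangeable.abs_map_sub_iidMixture_le [IsProbabilityMeasure ℙ] [Nonempty ι]
    (hexch : Exchangeable X ℙ) (hX : ∀ i, Measurable (X i)) (e : κ ↪ ι) {a b d : ℕ} (hb : 0 < b)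
    (hle : ∀ x : ι → S, a • withoutReplacement κ x ≤ b • withReplacement κ x)
    (hab : Fintype.card ι * b ≤ Fintype.card ι * a + d * b)
    {A : Set (κ → S)} (hA : MeasurableSet A) :
    |(ℙ.map fun ω i => X (e i) ω).real A - (iidMixture κ (empiricalLaw X ℙ)).real A|
      ≤ d / Fintype.card ι := by
  have : IsProbabilityMeasure (empiricalLaw X ℙ) := isProbabilityMeasure_empiricalLaw hX
  have : IsProbabilityMeasure (iidMixture κ (empiricalLaw X ℙ)) :=
    isProbabilityMeasure_iidMixture (ae_isProbabilityMeasure_empiricalLaw hX)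
  have : IsProbabilityMeasure (ℙ.map fun ω i => X (e i) ω) :=
    Measure.isProbabilityMeasure_map (by fun_prop)
  refine abs_measureReal_sub_le_div Fintype.card_pos hb ?_ hab hA
  rw [hexch.map_eq_bind_withoutReplacement hX e, iidMixture_empiricalLaw hX]
  exact smul_bind_le_smul_bind (measurable_empiricalMeasure fun f => by fun_prop)
    (measurable_empiricalMeasure fun f => by fun_prop) fun _ => hle _

end Exchangeable

/-- **Diaconis–Freedman finite approximation theorem.** If `(X_1, ..., X_n)` is exchangeable
with values in a measurable space `S` and `k ≤ n`, then there is a mixture `Q` of i.i.d. laws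
on `S^k` whose total variation distance (`d_TV(P,Q) = 2 sup_A |P(A) - Q(A)|`) from the law
`P` of `(X_1, ..., X_k)` is at most `2|S|k/n` when `S` is finite, and at most `k(k-1)/n` in
general. -/
theorem diaconis_freedman_finite_approximation
    {Ω : Type*} [MeasurableSpace Ω] (ℙ : Measure Ω) [IsProbabilityMeasure ℙ]
    {S : Type*} [MeasurableSpace S]
    (n k : ℕ) (hkn : k ≤ n) (hn : 0 < n)
    (X : Fin n → Ω → S)
    (hmeas : ∀ i, Measurable (X i))
    (hexch : ∀ σ : Equiv.Perm (Fin n),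
      Measure.map (fun ω (i : Fin n) => X (σ i) ω) ℙ
        = Measure.map (fun ω (i : Fin n) => X i ω) ℙ) :
    ∃ (μ : Measure (Measure S)) (Q : Measure (Fin k → S)),
      IsProbabilityMeasure μ ∧
      (∀ᵐ π ∂μ, IsProbabilityMeasure π) ∧
      Q = μ.bind (fun π => Measure.pi fun _ : Fin k => π) ∧
      (∀ A : Set (Fin k → S), MeasurableSet A →
        2 * |((Measure.map (fun ω (i : Fin k) => X (Fin.castLE hkn i) ω) ℙ) A).toReal
              - (Q A).toReal| ≤ (k * (k - 1) : ℝ) / n) ∧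
      (Finite S → ∀ A : Set (Fin k → S), MeasurableSet A →
        2 * |((Measure.map (fun ω (i : Fin k) => X (Fin.castLE hkn i) ω) ℙ) A).toReal
              - (Q A).toReal| ≤ (2 * Nat.card S * k : ℝ) / n) := by
  have : NeZero n := ⟨hn.ne'⟩
  have hX : Exchangeable X ℙ := hexch
  refine ⟨empiricalLaw X ℙ, iidMixture (Fin k) (empiricalLaw X ℙ),
    isProbabilityMeasure_empiricalLaw hmeas, ae_isProbabilityMeasure_empiricalLaw hmeas, rfl,
    fun A hA => ?_, fun _ A hA => ?_⟩
  · have hle := hX.abs_map_sub_iidMixture_le hmeas (Fin.castLEEmb hkn)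
      (pow_pos Fintype.card_pos _)
      descFactorial_smul_withoutReplacement_le_pow_smul_withReplacement
      (mul_pow_le_mul_descFactorial_add _ _) hA
    simp only [Fintype.card_fin, Nat.cast_choose_two] at hle
    calc _ ≤ 2 * ((k * (k - 1) / 2 : ℝ) / n) := by gcongr; exact hle
      _ = k * (k - 1) / n := by ring
  · have := Fintype.ofFinite S
    have hle := hX.abs_map_sub_iidMixture_le hmeas (Fin.castLEEmb hkn)
      (Nat.descFactorial_pos.mpr <| by simpa using hkn.trans (Nat.le_add_right _ _))
      descFactorial_smul_withoutReplacement_le_descFactorial_smul_withReplacement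
      (mul_descFactorial_add_le _ _ _) hA
    simp only [Fintype.card_fin, Nat.cast_mul, ← Nat.card_eq_fintype_card (α := S)] at hle
    calc _ ≤ 2 * ((Nat.card S * k : ℝ) / n) := by gcongr; exact hle
      _ = 2 * Nat.card S * k / n := by ring
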